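/- Let {Δ_n} be a sequence of closed intervals converging to a non-degenerate closed interval Δ, let μ ∈ USz(Δ), and let {h_n} be a sequence of continuous functions converging uniformly, with limit h, on some closed interval containing Δ in its interior. Then ( H_{Δ_n}( log v_n + h_n|_{Δ_n} ) )(z) → ( H_Δ( log v + h|_Δ ) )(z) locally uniformly in D_Δ as n→∞, where v_n and v are the Radon–Nikodym derivatives of μ|_{Δ_n} and μ|_Δ with respect to ω_{Δ_n} and ω_Δ, respectively. -/

import Mathlib

open MeasureTheory Set Filter Topology Polynomial

noncomputable section

/-- The arcsine distribution `dω_[a,b](x) = dx/(π √((x−a)(b−x)))` on `[a,b]`. -/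
def arcsineMeasure (a b : ℝ) : Measure ℝ :=
  (volume.restrict (Set.Icc a b)).withDensity
    fun x => ENNReal.ofReal (1 / (Real.pi * Real.sqrt ((x - a) * (b - x))))

/-- The branch of `√((z−a)(z−b))` holomorphic off `[a,b]` with `w(z) = z + O(1)` at `∞`. -/
def wBranch (a b : ℝ) (z : ℂ) : ℂ :=
  (z - a) * Complex.exp ((1 / 2 : ℂ) * Complex.log ((z - b) / (z - a)))

/-- Cauchy transform `∫ u(x)/(z−x) dω_[a,b](x)`. -/
def cauchyT (a b : ℝ) (u : ℝ → ℝ) (z : ℂ) : ℂ :=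
  ∫ x, (u x : ℂ) / (z - (x : ℂ)) ∂(arcsineMeasure a b)

/-- `H_Δ u`, the harmonic extension of `u` off `Δ = [a,b]`. -/
def harmExt (a b : ℝ) (u : ℝ → ℝ) (z : ℂ) : ℝ :=
  (wBranch a b z * cauchyT a b u z).re

/-- The outer function `Ω_Δ(f,z) := exp( w_Δ(z) ∫ log f(x)/(z−x) dω_Δ(x) )`. -/
def OmegaFun (a b : ℝ) (f : ℝ → ℝ) (z : ℂ) : ℂ :=
  Complex.exp (wBranch a b z * cauchyT a b (fun x => Real.log (f x)) z)

/-- The value of `Ω_Δ(f,·)` at infinity: `exp( ∫ log f dω_Δ )`. -/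
def OmegaInf (a b : ℝ) (f : ℝ → ℝ) : ℝ :=
  Real.exp (∫ x, Real.log (f x) ∂(arcsineMeasure a b))

/-- Radon–Nikodym derivative `μ′` of `μ` with respect to Lebesgue measure. -/
def lebDeriv (μ : Measure ℝ) (x : ℝ) : ℝ := (μ.rnDeriv volume x).toReal

/-- `v_Δ(x) = π μ′(x) √((x−a)(b−x))`, the density of `μ|_Δ` w.r.t. the arcsine law. -/
def vDens (μ : Measure ℝ) (a b : ℝ) (x : ℝ) : ℝ :=
  Real.pi * lebDeriv μ x * Real.sqrt ((x - a) * (b - x))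

/-- Szegő function `G(e^h μ|_[a,b], z)`. -/
def szegoG (μ : Measure ℝ) (a b : ℝ) (h : ℝ → ℝ) (z : ℂ) : ℂ :=
  OmegaFun a b (fun x => Real.sqrt (Real.exp (h x) * vDens μ a b x)) z

/-- Szegő function `G(e^h μ|_[a,b], ·)` at infinity. -/
def szegoGInf (μ : Measure ℝ) (a b : ℝ) (h : ℝ → ℝ) : ℝ :=
  OmegaInf a b fun x => Real.sqrt (Real.exp (h x) * vDens μ a b x)

/-- Support of a measure on `ℝ`. -/
def msupp (μ : Measure ℝ) : Set ℝ := {x | ∀ ε > 0, 0 < μ (Metric.ball x ε)}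

def suppInf (μ : Measure ℝ) : ℝ := sInf (msupp μ)
def suppSup (μ : Measure ℝ) : ℝ := sSup (msupp μ)

/-- `Δ(μ)`, the convex hull of the support of `μ`. -/
def convHullSupp (μ : Measure ℝ) : Set ℝ := Set.Icc (suppInf μ) (suppSup μ)

/-- Logarithmic potential `V^ω(x) = −∫ log|x−t| dω(t)`. -/
def logPot (ω : Measure ℝ) (x : ℝ) : ℝ := -∫ t, Real.log |x - t| ∂ω

/-- The Szegő condition `μ ∈ Sz([a,b])`. -/
def SzCond (μ : Measure ℝ) (a b : ℝ) : Prop :=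
  Integrable (fun x => Real.log (lebDeriv μ x)) (arcsineMeasure a b)

/-- The increasing affine map of `[a,b]` onto `[c,d]`. -/
def affIcc (a b c d : ℝ) (x : ℝ) : ℝ := c + ((d - c) / (b - a)) * (x - a)

/-- The uniform Szegő condition `μ ∈ USz([a,b])`. -/
def USzCond (μ : Measure ℝ) (a b : ℝ) : Prop :=
  SzCond μ a b ∧
  ∀ A B : ℕ → ℝ, (∀ n, A n < B n) → (∀ n, Set.Icc (A n) (B n) ⊆ convHullSupp μ) →
    Tendsto A atTop (𝓝 a) → Tendsto B atTop (𝓝 b) →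
    (∀ᶠ n in atTop, SzCond μ (A n) (B n)) ∧
    Tendsto (fun n => ∫ x,
        |Real.log (lebDeriv μ x) - Real.log (lebDeriv μ (affIcc a b (A n) (B n) x))|
          ∂(arcsineMeasure a b)) atTop (𝓝 0)

/-- `P` is the `n`-th monic orthogonal polynomial with respect to `ν`. -/
def IsMonicOP (ν : Measure ℝ) (n : ℕ) (P : Polynomial ℝ) : Prop :=
  P.Monic ∧ P.natDegree = n ∧ ∀ k < n, ∫ x, x ^ k * P.eval x ∂ν = 0

/-- The weighted measure `e^θ μ`. -/
def expWt (μ : Measure ℝ) (θ : ℝ → ℝ) : Measure ℝ :=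
  μ.withDensity fun x => ENNReal.ofReal (Real.exp (θ x))

/-- An Angelesco system of `d` measures, with `Δ(μ_i) = [lo i, hi i]`. -/
structure Angelesco (d : ℕ) (μ : Fin d → Measure ℝ) (lo hi : Fin d → ℝ) : Prop where
  two_le : 2 ≤ d
  bounded : ∀ i, Bornology.IsBounded (msupp (μ i))
  infinite : ∀ i, (msupp (μ i)).Infinite
  lo_eq : ∀ i, lo i = suppInf (μ i)
  hi_eq : ∀ i, hi i = suppSup (μ i)
  sep : ∀ i j, i < j → hi i < lo j

/-- The vector equilibrium measure `(ω_1,…,ω_d)` with parameter `c`,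
with `supp ω_i = [A i, B i] ⊆ [lo i, hi i]` and masses `c i`. -/
structure VecEquil (d : ℕ) (lo hi : Fin d → ℝ) (c : Fin d → ℝ)
    (ω : Fin d → Measure ℝ) (A B : Fin d → ℝ) : Prop where
  endpoints : ∀ i, lo i ≤ A i ∧ A i < B i ∧ B i ≤ hi i
  supp : ∀ i, msupp (ω i) = Set.Icc (A i) (B i)
  mass : ∀ i, ω i Set.univ = ENNReal.ofReal (c i)
  equil : ∀ j, ∃ ℓ : ℝ,
    (∀ x ∈ Set.Icc (A j) (B j), logPot (ω j) x + ∑ i, logPot (ω i) x = ℓ) ∧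
    (∀ x ∈ Set.Icc (lo j) (hi j) \ Set.Icc (A j) (B j),
        ℓ < logPot (ω j) x + ∑ i, logPot (ω i) x)

/-- The vector `(S_1,…,S_d)` of conjugate-symmetric outer functions in `H²(D_{Δ_i})`,
positive at infinity, with boundary moduli `g_i` satisfying
`|S_{i±}|² ∏_{j≠i} S_j = v_i` a.e. on `Δ_i` (outer functions positive at infinity are
recovered from their boundary moduli by `S_i = Ω_{Δ_i}(g_i, ·)`). -/
def IsSzegoVector (d : ℕ) (A B : Fin d → ℝ) (v : Fin d → ℝ → ℝ)
    (g : Fin d → ℝ → ℝ) (S : Fin d → ℂ → ℂ) : Prop :=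
  (∀ i x, 0 ≤ g i x) ∧
  (∀ i, Integrable (fun x => Real.log (g i x)) (arcsineMeasure (A i) (B i))) ∧
  (∀ i, S i = fun z => OmegaFun (A i) (B i) (g i) z) ∧
  (∀ i, ∀ᵐ x ∂(arcsineMeasure (A i) (B i)),
    (g i x) ^ 2 * ∏ j ∈ Finset.univ.erase i, (S j (x : ℂ)).re = v i x)

/-- The operator `ℋ` with component `i` equal to `−(1/2) Σ_{j≠i} H_{[A j, B j]} u_j`. -/
def calH (d : ℕ) (A B : Fin d → ℝ) (u : Fin d → ℝ → ℝ) (i : Fin d) (x : ℝ) : ℝ :=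
  -(1 / 2) * ∑ j ∈ Finset.univ.erase i, harmExt (A j) (B j) (u j) (x : ℂ)

/-- sup norm over `[a,b]`. -/
def supIcc (a b : ℝ) (f : ℝ → ℝ) : ℝ := sSup ((fun x => |f x|) '' Set.Icc a b)

/-- Norm of `C(Δ⃗)`. -/
def vecCNorm (d : ℕ) (A B : Fin d → ℝ) (u : Fin d → ℝ → ℝ) : ℝ :=
  ∑ i, supIcc (A i) (B i) (u i)

/-- Norm of `C¹(Δ⃗)`. -/
def vecC1Norm (d : ℕ) (A B : Fin d → ℝ) (u : Fin d → ℝ → ℝ) : ℝ :=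
  ∑ i, (supIcc (A i) (B i) (u i) +
    supIcc (A i) (B i) (derivWithin (u i) (Set.Icc (A i) (B i))))

/-- membership in `C(Δ⃗)`. -/
def memVecC (d : ℕ) (A B : Fin d → ℝ) (u : Fin d → ℝ → ℝ) : Prop :=
  ∀ i, ContinuousOn (u i) (Set.Icc (A i) (B i))

/-- membership in `C¹(Δ⃗)`. -/
def memVecC1 (d : ℕ) (A B : Fin d → ℝ) (u : Fin d → ℝ → ℝ) : Prop :=
  ∀ i, ContDiffOn ℝ 1 (u i) (Set.Icc (A i) (B i))

/-- `|w_Δ(x)|` for real `x`. -/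
def wAbs (p q x : ℝ) : ℝ := Real.sqrt |(x - p) * (x - q)|

/-- Riemann–Liouville type fractional integral of order 1/2. -/
def fracInt (γ : ℝ) (θ : ℝ → ℝ) (x : ℝ) : ℝ :=
  (Real.sqrt Real.pi)⁻¹ * ∫ t in γ..x, θ t / Real.sqrt |x - t|



lemma affIcc_sub_left (a b c d x : ℝ) : affIcc a b c d x - c = (d - c) / (b - a) * (x - a) := by
  unfold affIcc; ring

lemma affIcc_sub_right {a b : ℝ} (hab : a < b) (c d x : ℝ) :
    d - affIcc a b c d x = (d - c) / (b - a) * (b - x) := by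
  have : b - a ≠ 0 := by linarith
  unfold affIcc; field_simp; ring

lemma affIcc_dist {a b : ℝ} (hab : a < b) (c d x : ℝ) (hx : x ∈ Icc a b) :
    |affIcc a b c d x - x| ≤ |c - a| + |d - b| := by
  have h0 : 0 < b - a := by linarith
  have e : affIcc a b c d x - x
      = (c - a) * ((b - x) / (b - a)) + (d - b) * ((x - a) / (b - a)) := by
    unfold affIcc; field_simp; ring
  have h1 : |(b - x) / (b - a)| ≤ 1 := by
    rw [abs_of_nonneg (div_nonneg (by linarith [hx.2]) h0.le), div_le_one h0]; linarith [hx.1]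
  have h2 : |(x - a) / (b - a)| ≤ 1 := by
    rw [abs_of_nonneg (div_nonneg (by linarith [hx.1]) h0.le), div_le_one h0]; linarith [hx.2]
  rw [e]
  refine (abs_add_le _ _).trans ?_
  rw [abs_mul, abs_mul]
  exact add_le_add (mul_le_of_le_one_right (abs_nonneg _) h1)
    (mul_le_of_le_one_right (abs_nonneg _) h2)

lemma affIcc_continuous (a b c d : ℝ) : Continuous (affIcc a b c d) := by
  unfold affIcc; fun_prop

lemma affIcc_embedding {a b c d : ℝ} (hab : a < b) (hcd : c < d) :
    MeasurableEmbedding (affIcc a b c d) := by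
  have h0 : 0 < (d - c) / (b - a) := div_pos (by linarith) (by linarith)
  refine (affIcc_continuous a b c d).measurableEmbedding ?_
  intro x y hxy
  unfold affIcc at hxy
  have := mul_left_cancel₀ h0.ne' (add_left_cancel hxy)
  linarith

lemma affIcc_volume {a b c d : ℝ} (hab : a < b) (hcd : c < d) :
    ENNReal.ofReal ((d - c) / (b - a)) • Measure.map (affIcc a b c d) volume = volume := by
  have h0 : 0 < (d - c) / (b - a) := div_pos (by linarith) (by linarith)
  have e : affIcc a b c d = (fun x => (c - (d - c) / (b - a) * a) + x) ∘
      (fun x => (d - c) / (b - a) * x) := by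
    funext x; simp only [affIcc, Function.comp]; ring
  rw [e, ← Measure.map_map (by fun_prop) (by fun_prop), ← Measure.map_smul]
  have := Real.smul_map_volume_mul_left h0.ne'
  rw [abs_of_pos h0] at this
  rw [this]
  exact map_add_left_eq_self volume _

lemma affIcc_mem_iff {a b c d : ℝ} (hab : a < b) (hcd : c < d) (x : ℝ) :
    affIcc a b c d x ∈ Icc c d ↔ x ∈ Icc a b := by
  have h0 : 0 < (d - c) / (b - a) := div_pos (by linarith) (by linarith)
  have h1 := affIcc_sub_left a b c d x
  have h2 := affIcc_sub_right hab c d x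
  rw [mem_Icc, mem_Icc, ← sub_nonneg, h1, ← sub_nonneg (a := d), h2,
    mul_nonneg_iff_of_pos_left h0, mul_nonneg_iff_of_pos_left h0, sub_nonneg, sub_nonneg]

lemma affIcc_sqrt {a b c d : ℝ} (hab : a < b) (hcd : c < d) (x : ℝ) :
    Real.sqrt ((affIcc a b c d x - c) * (d - affIcc a b c d x))
      = (d - c) / (b - a) * Real.sqrt ((x - a) * (b - x)) := by
  have h0 : 0 < (d - c) / (b - a) := div_pos (by linarith) (by linarith)
  rw [affIcc_sub_left, affIcc_sub_right hab, show (d - c) / (b - a) * (x - a) *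
    ((d - c) / (b - a) * (b - x)) = ((d - c) / (b - a)) ^ 2 * ((x - a) * (b - x)) by ring,
    Real.sqrt_mul (sq_nonneg _), Real.sqrt_sq h0.le]

lemma arcsine_dens_meas (a b : ℝ) : Measurable
    fun x : ℝ => ENNReal.ofReal (1 / (Real.pi * Real.sqrt ((x - a) * (b - x)))) := by
  fun_prop

lemma arcsine_map {a b c d : ℝ} (hab : a < b) (hcd : c < d) :
    Measure.map (affIcc a b c d) (arcsineMeasure a b) = arcsineMeasure c d := by
  have h0 : 0 < (d - c) / (b - a) := div_pos (by linarith) (by linarith)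
  have hem := affIcc_embedding hab hcd
  ext s hs
  rw [hem.map_apply]
  unfold arcsineMeasure
  rw [withDensity_apply _ hs, withDensity_apply _ (hem.measurable hs),
    Measure.restrict_restrict hs, Measure.restrict_restrict (hem.measurable hs)]
  conv_rhs => rw [← affIcc_volume hab hcd]
  rw [Measure.restrict_smul, lintegral_smul_measure, hem.restrict_map, hem.lintegral_map]
  have : affIcc a b c d ⁻¹' (s ∩ Icc c d) = affIcc a b c d ⁻¹' s ∩ Icc a b := by
    ext x; simp only [mem_preimage, mem_inter_iff, affIcc_mem_iff hab hcd]
  rw [this, smul_eq_mul, ← lintegral_const_mul _ (by fun_prop (disch := exact hem.measurable))]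
  refine lintegral_congr fun x => ?_
  rw [affIcc_sqrt hab hcd, ← ENNReal.ofReal_mul h0.le]
  congr 1
  by_cases hS : Real.sqrt ((x - a) * (b - x)) = 0
  · simp [hS]
  · have := Real.pi_ne_zero
    have h1 : b - a ≠ 0 := by linarith
    have h2 : d - c ≠ 0 := by linarith
    field_simp

lemma arcsine_integrable_iff {a b : ℝ} (f : ℝ → ℝ) :
    Integrable f (arcsineMeasure a b) ↔
      IntegrableOn (fun x => (1 / (Real.pi * Real.sqrt ((x - a) * (b - x)))) * f x) (Icc a b) := by
  unfold arcsineMeasure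
  rw [integrable_withDensity_iff_integrable_smul' (arcsine_dens_meas a b)
    (Eventually.of_forall fun _ => ENNReal.ofReal_lt_top)]
  unfold IntegrableOn
  refine integrable_congr (Eventually.of_forall fun x => ?_)
  simp only [smul_eq_mul]
  rw [ENNReal.toReal_ofReal (by positivity)]

lemma arcsine_integral {a b : ℝ} (f : ℝ → ℝ) :
    ∫ x, f x ∂(arcsineMeasure a b) =
      ∫ x in Icc a b, (1 / (Real.pi * Real.sqrt ((x - a) * (b - x)))) * f x := by
  unfold arcsineMeasure
  rw [integral_withDensity_eq_integral_toReal_smul (arcsine_dens_meas a b)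
    (Eventually.of_forall fun _ => ENNReal.ofReal_lt_top)]
  refine integral_congr_ae (Eventually.of_forall fun x => ?_)
  simp only [smul_eq_mul]
  rw [ENNReal.toReal_ofReal (by positivity)]

lemma arcsine_ae_mem (a b : ℝ) : ∀ᵐ x ∂(arcsineMeasure a b), x ∈ Ioo a b := by
  unfold arcsineMeasure
  refine (withDensity_absolutelyContinuous _ _).ae_le ?_
  rw [← restrict_Ioo_eq_restrict_Icc]
  exact ae_restrict_mem measurableSet_Ioo

lemma aux_pow_bound {L x y : ℝ} (hx : 0 < x) (hy : 0 < y) (hL : 0 < L) (hxy : x + y = L) :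
    (x * y) ^ (-(3/4) : ℝ) ≤ (L / 2) ^ (-(3/4) : ℝ) * (x ^ (-(3/4) : ℝ) + y ^ (-(3/4) : ℝ)) := by
  rw [Real.mul_rpow hx.le hy.le]
  have px : 0 < x ^ (-(3/4) : ℝ) := Real.rpow_pos_of_pos hx _
  have py : 0 < y ^ (-(3/4) : ℝ) := Real.rpow_pos_of_pos hy _
  have pL : 0 < (L / 2) ^ (-(3/4) : ℝ) := Real.rpow_pos_of_pos (by positivity) _
  rcases le_total (L / 2) x with h | h
  · have := Real.rpow_le_rpow_of_nonpos (z := (-(3/4) : ℝ)) (by positivity) h (by norm_num)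
    nlinarith
  · have := Real.rpow_le_rpow_of_nonpos (z := (-(3/4) : ℝ)) (y := y)
      (show 0 < L / 2 by positivity) (by linarith) (by norm_num)
    nlinarith

lemma aux_log_bound {t : ℝ} (ht : 0 < t) : |Real.log t| / Real.sqrt t ≤ 4 * t ^ (-(3/4) : ℝ) + 4 * t := by
  have h1 : Real.log (t ^ (-(1/4) : ℝ)) ≤ t ^ (-(1/4) : ℝ) := by
    have := Real.log_le_sub_one_of_pos (Real.rpow_pos_of_pos ht (-(1/4) : ℝ)); linarith
  rw [Real.log_rpow ht] at h1
  have hs : 0 < Real.sqrt t := Real.sqrt_pos.2 ht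
  have e : t ^ (-(3/4) : ℝ) = t ^ (-(1/4) : ℝ) / Real.sqrt t := by
    rw [Real.sqrt_eq_rpow, ← Real.rpow_sub ht]; norm_num
  have p1 : 0 < t ^ (-(1/4) : ℝ) := Real.rpow_pos_of_pos ht _
  rcases le_total 1 t with h | h
  · have h2 : |Real.log t| ≤ t := by
      rw [abs_of_nonneg (Real.log_nonneg h)]; linarith [Real.log_le_sub_one_of_pos ht]
    have h3 : 1 ≤ Real.sqrt t := by rw [Real.one_le_sqrt]; exact h
    have h4 : |Real.log t| / Real.sqrt t ≤ t := (div_le_self (abs_nonneg _) h3).trans h2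
    have : 0 < t ^ (-(3/4) : ℝ) := Real.rpow_pos_of_pos ht _
    linarith
  · rw [abs_of_nonpos (Real.log_nonpos ht.le h), e]
    have : -Real.log t / Real.sqrt t ≤ 4 * (t ^ (-(1/4) : ℝ) / Real.sqrt t) := by
      rw [← mul_div_assoc]; gcongr; linarith
    linarith

lemma aux_one_bound {t : ℝ} (ht : 0 < t) : 1 / Real.sqrt t ≤ t ^ (-(3/4) : ℝ) + 1 := by
  have p : 0 < t ^ (-(3/4) : ℝ) := Real.rpow_pos_of_pos ht _
  have hs : 0 < Real.sqrt t := Real.sqrt_pos.2 ht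
  rcases le_total 1 t with h | h
  · have h3 : 1 ≤ Real.sqrt t := by rw [Real.one_le_sqrt]; exact h
    have : 1 / Real.sqrt t ≤ 1 := by rw [div_le_one hs]; exact h3
    linarith
  · have : 1 / Real.sqrt t = t ^ (-(1/2) : ℝ) := by
      rw [Real.rpow_neg ht.le, Real.sqrt_eq_rpow, one_div]
    rw [this]
    have := Real.rpow_le_rpow_of_exponent_ge ht h (show (-(3/4) : ℝ) ≤ -(1/2) by norm_num)
    linarith

lemma aux_int {a b : ℝ} (hab : a < b) :
    IntegrableOn (fun x => ((x - a) * (b - x)) ^ (-(3/4) : ℝ)) (Icc a b) := by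
  have i1 : IntervalIntegrable (fun x : ℝ => x ^ (-(3/4) : ℝ)) volume 0 (b - a) :=
    intervalIntegral.intervalIntegrable_rpow' (by norm_num)
  have i2 := i1.comp_sub_right a
  have i3 := i1.comp_sub_left b
  simp only [zero_add, sub_add_cancel, sub_zero, sub_sub_cancel] at i2 i3
  have i4 := (i2.add i3.symm).const_mul (((b - a) / 2) ^ (-(3/4) : ℝ))
  rw [intervalIntegrable_iff_integrableOn_Ioo_of_le hab.le] at i4
  rw [integrableOn_Icc_iff_integrableOn_Ioo]
  refine Integrable.mono' i4 (Measurable.aestronglyMeasurable (by fun_prop)) ?_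
  filter_upwards [ae_restrict_mem measurableSet_Ioo] with x hx
  have hx1 : 0 < x - a := by linarith [hx.1]
  have hx2 : 0 < b - x := by linarith [hx.2]
  rw [Real.norm_of_nonneg (by positivity)]
  exact aux_pow_bound hx1 hx2 (by linarith) (by ring)

lemma arcsine_finite {a b : ℝ} (hab : a < b) : IsFiniteMeasure (arcsineMeasure a b) := by
  have : Integrable (fun _ : ℝ => (1 : ℝ)) (arcsineMeasure a b) := by
    rw [arcsine_integrable_iff, integrableOn_Icc_iff_integrableOn_Ioo]
    have i := ((aux_int hab).add (integrableOn_const (C := (1 : ℝ)) (by simp))).const_mul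
      (1 / Real.pi)
    refine Integrable.mono' (IntegrableOn.mono_set i Ioo_subset_Icc_self)
      (Measurable.aestronglyMeasurable (by fun_prop)) ?_
    filter_upwards [ae_restrict_mem measurableSet_Ioo] with x hx
    have hx1 : 0 < x - a := by linarith [hx.1]
    have hx2 : 0 < b - x := by linarith [hx.2]
    have := aux_one_bound (mul_pos hx1 hx2)
    rw [Real.norm_of_nonneg (by positivity), mul_one, ← one_div_mul_one_div]
    have := Real.pi_pos
    simp only [Pi.add_apply]
    gcongr
  rw [integrable_const_iff] at this
  simpa using this

lemma arcsine_log_int {a b : ℝ} (hab : a < b) :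
    Integrable (fun x => Real.log (Real.pi * Real.sqrt ((x - a) * (b - x)))) (arcsineMeasure a b) := by
  have := arcsine_finite hab
  have key : Integrable (fun x => Real.log ((x - a) * (b - x))) (arcsineMeasure a b) := by
    rw [arcsine_integrable_iff, integrableOn_Icc_iff_integrableOn_Ioo]
    have c : IntegrableOn (fun x : ℝ => 4 * ((x - a) * (b - x))) (Icc a b) :=
      Continuous.integrableOn_Icc (by fun_prop)
    have i := (((aux_int hab).const_mul 4).add c).const_mul (1 / Real.pi)
    refine Integrable.mono' (IntegrableOn.mono_set i Ioo_subset_Icc_self)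
      (Measurable.aestronglyMeasurable (by fun_prop)) ?_
    filter_upwards [ae_restrict_mem measurableSet_Ioo] with x hx
    have hx1 : 0 < x - a := by linarith [hx.1]
    have hx2 : 0 < b - x := by linarith [hx.2]
    have := aux_log_bound (mul_pos hx1 hx2)
    rw [norm_mul, Real.norm_of_nonneg (by positivity), ← one_div_mul_one_div, Real.norm_eq_abs,
      mul_assoc, one_div_mul_eq_div (Real.sqrt _)]
    have := Real.pi_pos
    simp only [Pi.add_apply]
    gcongr
  refine ((integrable_const (Real.log Real.pi)).add (key.div_const 2)).congr ?_
  filter_upwards [arcsine_ae_mem a b] with x hx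
  have hx1 : 0 < x - a := by linarith [hx.1]
  have hx2 : 0 < b - x := by linarith [hx.2]
  have hp := mul_pos hx1 hx2
  simp only [Pi.add_apply]
  rw [Real.log_mul Real.pi_ne_zero (Real.sqrt_pos.2 hp).ne', Real.log_sqrt hp.le]

lemma affIcc_integrable {a b c d : ℝ} (hab : a < b) (hcd : c < d) {F : ℝ → ℝ}
    (hF : Integrable F) : Integrable (fun x => F (affIcc a b c d x)) := by
  have h0 : 0 < (d - c) / (b - a) := div_pos (by linarith) (by linarith)
  have hem := affIcc_embedding hab hcd
  rw [← affIcc_volume hab hcd, integrable_smul_measure (by simpa using h0) (by simp),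
    hem.integrable_map_iff] at hF
  exact hF

lemma affIcc_integral {a b c d : ℝ} (hab : a < b) (hcd : c < d) (F : ℝ → ℝ) :
    ∫ x, F x = (d - c) / (b - a) * ∫ x, F (affIcc a b c d x) := by
  have h0 : 0 < (d - c) / (b - a) := div_pos (by linarith) (by linarith)
  have hem := affIcc_embedding hab hcd
  conv_lhs => rw [← affIcc_volume hab hcd]
  rw [integral_smul_measure, hem.integral_map, ENNReal.toReal_ofReal h0.le, smul_eq_mul]

lemma affIcc_tendsto {a b : ℝ} (hab : a < b) {A B : ℕ → ℝ}
    (hA : Tendsto A atTop (𝓝 a)) (hB : Tendsto B atTop (𝓝 b)) (x : ℝ) :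
    Tendsto (fun n => affIcc a b (A n) (B n) x) atTop (𝓝 x) := by
  have : Tendsto (fun n => affIcc a b (A n) (B n) x) atTop (𝓝 (a + (b - a) / (b - a) * (x - a))) := by
    unfold affIcc
    exact hA.add (((hB.sub hA).div_const _).mul_const _)
  rwa [div_self (by linarith), one_mul, add_sub_cancel] at this

lemma ratio_tendsto {a b : ℝ} (hab : a < b) {A B : ℕ → ℝ}
    (hA : Tendsto A atTop (𝓝 a)) (hB : Tendsto B atTop (𝓝 b)) :
    Tendsto (fun n => (B n - A n) / (b - a)) atTop (𝓝 1) := by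
  have := (hB.sub hA).div_const (b - a)
  rwa [div_self (by linarith)] at this

lemma affIcc_near {a b : ℝ} (hab : a < b) {A B : ℕ → ℝ}
    (hA : Tendsto A atTop (𝓝 a)) (hB : Tendsto B atTop (𝓝 b)) {δ : ℝ} (hδ : 0 < δ) :
    ∀ᶠ n in atTop, ∀ x ∈ Icc a b, |affIcc a b (A n) (B n) x - x| < δ := by
  have h1 : Tendsto (fun n => |A n - a| + |B n - b|) atTop (𝓝 0) := by
    have := ((hA.sub_const a).abs).add ((hB.sub_const b).abs)
    simpa using this
  filter_upwards [h1.eventually_lt_const hδ] with n hn x hx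
  exact (affIcc_dist hab _ _ _ hx).trans_lt hn

lemma affIcc_L1 {a b : ℝ} (hab : a < b) {A B : ℕ → ℝ} (hAB : ∀ n, A n < B n)
    (hA : Tendsto A atTop (𝓝 a)) (hB : Tendsto B atTop (𝓝 b)) {f : ℝ → ℝ} (hf : Integrable f) :
    Tendsto (fun n => ∫ x in Icc a b, |f (affIcc a b (A n) (B n) x) - f x|) atTop (𝓝 0) := by
  rw [tendsto_order]
  refine ⟨fun c hc => Eventually.of_forall fun n => hc.trans_le
    (integral_nonneg fun x => abs_nonneg _), fun ε hε => ?_⟩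
  obtain ⟨g, -, hg1, hgc, hgi⟩ := hf.exists_hasCompactSupport_integral_sub_le
    (show 0 < ε / 6 by positivity)
  obtain ⟨M, hM⟩ := (isCompact_Icc (a := a - 1) (b := b + 1)).exists_bound_of_continuousOn
    hgc.continuousOn
  have hgl : Tendsto (fun n => ∫ x in Icc a b, |g (affIcc a b (A n) (B n) x) - g x|) atTop
      (𝓝 (∫ x in Icc a b, (0 : ℝ))) := by
    refine tendsto_integral_filter_of_dominated_convergence (fun _ => M + M) ?_ ?_ ?_ ?_
    · refine Eventually.of_forall fun n => Continuous.aestronglyMeasurable ?_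
      have := affIcc_continuous a b (A n) (B n)
      fun_prop
    · filter_upwards [affIcc_near hab hA hB one_pos] with n hn
      filter_upwards [ae_restrict_mem measurableSet_Icc] with x hx
      have h1 := abs_lt.1 (hn x hx)
      rw [Real.norm_eq_abs, abs_abs]
      refine (abs_sub _ _).trans (add_le_add (hM _ ⟨?_, ?_⟩) (hM _ ⟨?_, ?_⟩)) <;>
        linarith [hx.1, hx.2]
    · exact integrable_const _
    · refine Eventually.of_forall fun x => ?_
      have := ((hgc.tendsto x).comp (affIcc_tendsto hab hA hB x)).sub_const (g x)
      simpa using this.abs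
  rw [integral_zero] at hgl
  have hr := (ratio_tendsto hab hA hB).eventually_const_lt (show (1/2 : ℝ) < 1 by norm_num)
  filter_upwards [hgl.eventually_lt_const (show 0 < ε / 6 by positivity), hr] with n hn hrn
  have i0 : Integrable (fun x => |f x - g x|) := (hf.sub hgi).abs
  have i1 := affIcc_integrable hab (hAB n) i0
  have i2 : Integrable (fun x => |g (affIcc a b (A n) (B n) x) - g x|) :=
    ((affIcc_integrable hab (hAB n) hgi).sub hgi).abs
  have i3 : Integrable (fun x => |f (affIcc a b (A n) (B n) x) - f x|) :=
    ((affIcc_integrable hab (hAB n) hf).sub hf).abs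
  have e1 := affIcc_integral hab (hAB n) (fun x => |f x - g x|)
  have hg1' : ∫ x, |f x - g x| ≤ ε / 6 := hg1
  have nn : 0 ≤ ∫ x, |f (affIcc a b (A n) (B n) x) - g (affIcc a b (A n) (B n) x)| :=
    integral_nonneg fun x => abs_nonneg _
  have s1 : ∫ x in Icc a b, |f x - g x| ≤ ∫ x, |f x - g x| :=
    setIntegral_le_integral i0 (Eventually.of_forall fun x => abs_nonneg _)
  have s2 := setIntegral_le_integral (s := Icc a b) i1 (Eventually.of_forall fun x => abs_nonneg _)
  have s3 : ∫ x in Icc a b, |f (affIcc a b (A n) (B n) x) - f x| ≤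
      ∫ x in Icc a b, ((|f (affIcc a b (A n) (B n) x) - g (affIcc a b (A n) (B n) x)|
        + |g (affIcc a b (A n) (B n) x) - g x|) + |f x - g x|) := by
    refine integral_mono i3.integrableOn ((i1.add i2).add i0).integrableOn fun x => ?_
    have t1 := abs_sub_le (f (affIcc a b (A n) (B n) x)) (g (affIcc a b (A n) (B n) x)) (f x)
    have t2 := abs_sub_le (g (affIcc a b (A n) (B n) x)) (g x) (f x)
    rw [abs_sub_comm (g x) (f x)] at t2
    dsimp only
    linarith
  have i12 : Integrable (fun x => |f (affIcc a b (A n) (B n) x) - g (affIcc a b (A n) (B n) x)|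
      + |g (affIcc a b (A n) (B n) x) - g x|) := i1.add i2
  rw [integral_add i12.integrableOn i0.integrableOn,
    integral_add i1.integrableOn i2.integrableOn] at s3
  nlinarith

lemma affIcc_weighted {a b : ℝ} (hab : a < b) {A B : ℕ → ℝ} (hAB : ∀ n, A n < B n)
    (hA : Tendsto A atTop (𝓝 a)) (hB : Tendsto B atTop (𝓝 b)) {χ : ℝ → ℝ} (hχ : Measurable χ)
    (hχ1 : ∀ x, |χ x| ≤ 1) {G : ℝ → ℝ} (hG : IntegrableOn G (Icc a b)) (hG0 : ∀ x, 0 ≤ G x) :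
    Tendsto (fun n => ∫ x in Icc a b, G x * |χ (affIcc a b (A n) (B n) x) - χ x|) atTop (𝓝 0) := by
  have hmG : ∀ k : ℕ, IntegrableOn (fun x => min (G x) (k : ℝ)) (Icc a b) := fun k =>
    Integrable.inf hG (integrable_const _)
  have htr : Tendsto (fun k : ℕ => ∫ x in Icc a b, (G x - min (G x) k)) atTop
      (𝓝 (∫ x in Icc a b, (0 : ℝ))) := by
    refine tendsto_integral_filter_of_dominated_convergence G ?_ ?_ hG ?_
    · exact Eventually.of_forall fun k => (hG.sub (hmG k)).aestronglyMeasurable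
    · refine Eventually.of_forall fun k => Eventually.of_forall fun x => ?_
      have h1 := min_le_left (G x) (k : ℝ)
      have h2 : 0 ≤ min (G x) (k : ℝ) := le_min (hG0 x) (by positivity)
      rw [Real.norm_of_nonneg (by linarith)]; linarith
    · refine Eventually.of_forall fun x => ?_
      refine tendsto_const_nhds.congr' ?_
      filter_upwards [eventually_ge_atTop ⌈G x⌉₊] with k hk
      rw [min_eq_left (Nat.ceil_le.1 hk), sub_self]
  rw [integral_zero] at htr
  have hfi : Integrable ((Icc (a - 1) (b + 1)).indicator χ) := by
    rw [integrable_indicator_iff measurableSet_Icc]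
    refine Integrable.mono' (integrable_const (1 : ℝ)) hχ.aestronglyMeasurable
      (Eventually.of_forall hχ1)
  have hL := affIcc_L1 hab hAB hA hB hfi
  rw [tendsto_order]
  refine ⟨fun c hc => Eventually.of_forall fun n => hc.trans_le
    (integral_nonneg fun x => mul_nonneg (hG0 x) (abs_nonneg _)), fun ε hε => ?_⟩
  obtain ⟨k, hk⟩ := (htr.eventually_lt_const (show 0 < ε / 4 by positivity)).exists
  filter_upwards [hL.eventually_lt_const (show 0 < ε / (2 * (k + 1)) by positivity),
    affIcc_near hab hA hB one_pos] with n hn hnear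
  have hml := (affIcc_embedding hab (hAB n)).measurable
  have hin : IntegrableOn (fun x => |(Icc (a - 1) (b + 1)).indicator χ (affIcc a b (A n) (B n) x)
      - (Icc (a - 1) (b + 1)).indicator χ x|) (Icc a b) :=
    (((affIcc_integrable hab (hAB n) hfi).sub hfi).abs).integrableOn
  have hR : IntegrableOn (fun x => (k : ℝ) * |(Icc (a - 1) (b + 1)).indicator χ
      (affIcc a b (A n) (B n) x) - (Icc (a - 1) (b + 1)).indicator χ x|
      + 2 * (G x - min (G x) k)) (Icc a b) :=
    (hin.const_mul _).add ((hG.sub (hmG k)).const_mul 2)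
  have hb2 : ∀ x, |χ (affIcc a b (A n) (B n) x) - χ x| ≤ 2 := fun x =>
    (abs_sub _ _).trans (by linarith [hχ1 x, hχ1 (affIcc a b (A n) (B n) x)])
  have hle : ∫ x in Icc a b, G x * |χ (affIcc a b (A n) (B n) x) - χ x| ≤
      ∫ x in Icc a b, ((k : ℝ) * |(Icc (a - 1) (b + 1)).indicator χ
      (affIcc a b (A n) (B n) x) - (Icc (a - 1) (b + 1)).indicator χ x|
      + 2 * (G x - min (G x) k)) := by
    refine integral_mono_of_nonneg (Eventually.of_forall fun x =>
      mul_nonneg (hG0 x) (abs_nonneg _)) hR ?_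
    filter_upwards [ae_restrict_mem measurableSet_Icc] with x hx
    have h1 := abs_lt.1 (hnear x hx)
    rw [indicator_of_mem (show x ∈ Icc (a - 1) (b + 1) from ⟨by linarith [hx.1], by linarith [hx.2]⟩),
      indicator_of_mem (show affIcc a b (A n) (B n) x ∈ Icc (a - 1) (b + 1) from
        ⟨by linarith [hx.1], by linarith [hx.2]⟩)]
    have h2 := hb2 x
    have h3 := abs_nonneg (χ (affIcc a b (A n) (B n) x) - χ x)
    have h4 := min_le_left (G x) (k : ℝ)
    have h5 := min_le_right (G x) (k : ℝ)
    nlinarith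
  have hG2 : IntegrableOn (fun x => 2 * (G x - min (G x) (k : ℝ))) (Icc a b) :=
    (hG.sub (hmG k)).const_mul 2
  rw [integral_add (hin.const_mul _) hG2, integral_const_mul,
    integral_const_mul] at hle
  have h6 : (k : ℝ) * (ε / (2 * (k + 1))) ≤ ε / 2 := by
    rw [mul_div_assoc', div_le_div_iff₀ (by positivity) (by positivity)]
    nlinarith
  have h7 := mul_le_mul_of_nonneg_left hn.le (Nat.cast_nonneg (α := ℝ) k)
  linarith

lemma cauchyT_aff {a b c d : ℝ} (hab : a < b) (hcd : c < d) (u : ℝ → ℝ) (z : ℂ) :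
    cauchyT c d u z = ∫ x, (u (affIcc a b c d x) : ℂ) / (z - (affIcc a b c d x : ℝ))
      ∂(arcsineMeasure a b) := by
  unfold cauchyT
  rw [← arcsine_map hab hcd, (affIcc_embedding hab hcd).integral_map]

lemma exists_gap {a b : ℝ} {z₀ : ℂ} (hz : z₀ ∈ (Complex.ofReal '' Icc a b)ᶜ) :
    ∃ δ > 0, ∀ x ∈ Icc a b, δ ≤ ‖z₀ - (x : ℂ)‖ := by
  have hcl : IsClosed (Complex.ofReal '' Icc a b) :=
    (isCompact_Icc.image Complex.continuous_ofReal).isClosed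
  obtain ⟨δ, hδ, hb⟩ := Metric.isOpen_iff.1 hcl.isOpen_compl z₀ hz
  refine ⟨δ, hδ, fun x hx => ?_⟩
  by_contra hlt
  push Not at hlt
  refine hb (a := (x : ℂ)) ?_ ⟨x, hx, rfl⟩
  rw [Metric.mem_ball, dist_comm, dist_eq_norm]
  exact hlt

lemma cauchyT_tendsto {a b : ℝ} (hab : a < b) {A B : ℕ → ℝ} (hAB : ∀ n, A n < B n)
    (hA : Tendsto A atTop (𝓝 a)) (hB : Tendsto B atTop (𝓝 b)) (u : ℕ → ℝ → ℝ) (U : ℝ → ℝ)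
    (hU : Integrable U (arcsineMeasure a b))
    (hu : ∀ᶠ n in atTop, Integrable (fun x => u n (affIcc a b (A n) (B n) x)) (arcsineMeasure a b))
    (hlim : Tendsto (fun n => ∫ x, |u n (affIcc a b (A n) (B n) x) - U x| ∂(arcsineMeasure a b))
      atTop (𝓝 0)) {z₀ : ℂ} (hz : z₀ ∈ (Complex.ofReal '' Icc a b)ᶜ) :
    Tendsto (fun y : ℕ × ℂ => cauchyT (A y.1) (B y.1) (u y.1) y.2) (atTop ×ˢ 𝓝 z₀)
      (𝓝 (cauchyT a b U z₀)) := by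
  obtain ⟨δ, hδ, hgap⟩ := exists_gap hz
  set e : ℕ × ℂ → ℝ := fun y => ‖z₀ - y.2‖ + (|A y.1 - a| + |B y.1 - b|) with he
  have he0 : Tendsto e (atTop ×ˢ 𝓝 z₀) (𝓝 0) := by
    have h1 : Tendsto (fun n => |A n - a| + |B n - b|) atTop (𝓝 0) := by
      have := ((hA.sub_const a).abs).add ((hB.sub_const b).abs)
      simpa using this
    have h2 : Tendsto (fun z : ℂ => ‖z₀ - z‖) (𝓝 z₀) (𝓝 0) := by
      have : Continuous fun z : ℂ => ‖z₀ - z‖ := by fun_prop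
      simpa using this.tendsto z₀
    have := (h2.comp tendsto_snd).add (h1.comp tendsto_fst)
    rw [add_zero] at this
    exact this
  rw [tendsto_iff_norm_sub_tendsto_zero]
  have hbound : Tendsto (fun y : ℕ × ℂ => (2 / δ) * (∫ x, |u y.1 (affIcc a b (A y.1) (B y.1) x)
      - U x| ∂(arcsineMeasure a b)) + (2 / δ ^ 2 * e y) * ∫ x, |U x| ∂(arcsineMeasure a b))
      (atTop ×ˢ 𝓝 z₀) (𝓝 0) := by
    have := ((hlim.comp (tendsto_fst (g := 𝓝 z₀))).const_mul (2 / δ)).add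
      ((he0.const_mul (2 / δ ^ 2)).mul_const (∫ x, |U x| ∂(arcsineMeasure a b)))
    simpa using this
  refine squeeze_zero' (Eventually.of_forall fun y => norm_nonneg _) ?_ hbound
  filter_upwards [he0.eventually_lt_const (show 0 < δ / 2 by positivity),
    tendsto_fst.eventually hu] with y hy huy
  obtain ⟨n, z⟩ := y
  dsimp only at hy huy ⊢
  have hee : 0 ≤ e (n, z) := by positivity
  rw [cauchyT_aff hab (hAB n)]
  unfold cauchyT
  have hml := (affIcc_embedding hab (hAB n)).measurable
  set l := affIcc a b (A n) (B n) with hl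
  have hd : ∀ x ∈ Icc a b, ‖(z₀ - (x : ℂ)) - (z - (l x : ℂ))‖ ≤ e (n, z) := by
    intro x hx
    have h1 : (z₀ - (x : ℂ)) - (z - (l x : ℂ)) = (z₀ - z) + ((l x - x : ℝ) : ℂ) := by
      push_cast; ring
    rw [h1]
    refine (norm_add_le _ _).trans ?_
    rw [Complex.norm_real, Real.norm_eq_abs]
    have := affIcc_dist hab (A n) (B n) x hx
    simp only [he]
    linarith
  have hk : ∀ x ∈ Icc a b, δ / 2 ≤ ‖z - (l x : ℂ)‖ := by
    intro x hx
    have h1 := norm_sub_norm_le (z₀ - (x : ℂ)) (z - (l x : ℂ))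
    have h2 := hd x hx
    have h3 := hgap x hx
    linarith
  have hmem : ∀ᵐ x ∂(arcsineMeasure a b), x ∈ Icc a b :=
    (arcsine_ae_mem a b).mono fun x hx => Ioo_subset_Icc_self hx
  have I1 : Integrable (fun x => (u n (l x) : ℂ) / (z - (l x : ℂ))) (arcsineMeasure a b) := by
    refine Integrable.mono' (huy.norm.const_mul (2 / δ)) ?_ ?_
    · refine AEMeasurable.aestronglyMeasurable (AEMeasurable.div
        (Complex.measurable_ofReal.comp_aemeasurable huy.aemeasurable) (Measurable.aemeasurable ?_))
      exact measurable_const.sub (Complex.measurable_ofReal.comp hml)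
    · filter_upwards [hmem] with x hx
      rw [norm_div, Complex.norm_real, div_mul_eq_mul_div, mul_comm, ← div_div_eq_mul_div]
      gcongr
      exact hk x hx
  have I2 : Integrable (fun x => (U x : ℂ) / (z₀ - (x : ℂ))) (arcsineMeasure a b) := by
    refine Integrable.mono' (hU.norm.const_mul (1 / δ)) ?_ ?_
    · refine AEMeasurable.aestronglyMeasurable (AEMeasurable.div
        (Complex.measurable_ofReal.comp_aemeasurable hU.aemeasurable) (Measurable.aemeasurable ?_))
      exact measurable_const.sub (Complex.measurable_ofReal.comp measurable_id)
    · filter_upwards [hmem] with x hx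
      rw [norm_div, Complex.norm_real, one_div_mul_eq_div]
      gcongr
      exact hgap x hx
  have J : Integrable (fun x => 2 / δ * |u n (l x) - U x|) (arcsineMeasure a b) :=
    (huy.sub hU).abs.const_mul _
  rw [← integral_sub I1 I2, ← integral_const_mul, ← integral_const_mul, ← integral_add
    J (hU.abs.const_mul _)]
  refine norm_integral_le_of_norm_le (J.add (hU.abs.const_mul _)) ?_
  filter_upwards [hmem] with x hx
  have hk1 := hk x hx
  have hk2 := hgap x hx
  have hd1 := hd x hx
  have n1 : z - (l x : ℂ) ≠ 0 := norm_pos_iff.1 (by linarith)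
  have n2 : z₀ - (x : ℂ) ≠ 0 := norm_pos_iff.1 (by linarith)
  have h1 : (u n (l x) : ℂ) / (z - (l x : ℂ)) - (U x : ℂ) / (z₀ - (x : ℂ)) =
      ((u n (l x) - U x : ℝ) : ℂ) / (z - (l x : ℂ)) +
      ((U x : ℝ) : ℂ) * (((z₀ - (x : ℂ)) - (z - (l x : ℂ))) / ((z - (l x : ℂ)) * (z₀ - (x : ℂ)))) := by
    push_cast; field_simp; ring
  rw [h1]
  refine (norm_add_le _ _).trans (add_le_add ?_ ?_)
  · rw [norm_div, Complex.norm_real, div_mul_eq_mul_div, mul_comm, ← div_div_eq_mul_div]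
    simp only [Real.norm_eq_abs, Pi.sub_apply]
    gcongr
  · rw [norm_mul, norm_div, norm_mul, Complex.norm_real, mul_comm, Real.norm_eq_abs]
    gcongr
    calc ‖(z₀ - (x : ℂ)) - (z - (l x : ℂ))‖ / (‖z - (l x : ℂ)‖ * ‖z₀ - (x : ℂ)‖)
        ≤ e (n, z) / (δ / 2 * δ) := by gcongr
      _ = 2 / δ ^ 2 * e (n, z) := by field_simp

lemma wBranch_tendsto {a b : ℝ} (hab : a < b) {A B : ℕ → ℝ}
    (hA : Tendsto A atTop (𝓝 a)) (hB : Tendsto B atTop (𝓝 b))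
    {z₀ : ℂ} (hz : z₀ ∈ (Complex.ofReal '' Icc a b)ᶜ) :
    Tendsto (fun y : ℕ × ℂ => wBranch (A y.1) (B y.1) y.2) (atTop ×ˢ 𝓝 z₀)
      (𝓝 (wBranch a b z₀)) := by
  have hza : z₀ - a ≠ 0 := by
    intro h0
    exact hz ⟨a, ⟨le_refl a, hab.le⟩, (sub_eq_zero.1 h0).symm⟩
  have hs : (z₀ - b) / (z₀ - a) ∈ Complex.slitPlane := by
    by_contra hns
    rw [Complex.mem_slitPlane_iff_not_le_zero, not_not] at hns
    set t := (z₀ - b) / (z₀ - a) with ht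
    rw [Complex.le_def] at hns
    have hre : t.re ≤ 0 := hns.1
    have hti : t = (t.re : ℂ) := Complex.ext rfl (by simpa using hns.2)
    have h1 : z₀ - b = (t.re : ℂ) * (z₀ - a) := by
      rw [← hti, ht]; field_simp
    have h2 : (1 - (t.re : ℂ)) ≠ 0 := by
      intro h3
      have : (1 - t.re : ℝ) = 0 := by exact_mod_cast h3
      linarith
    have hp : 0 < 1 - t.re := by linarith
    refine hz ⟨(b - t.re * a) / (1 - t.re), ⟨?_, ?_⟩, ?_⟩
    · rw [le_div_iff₀ hp]; nlinarith
    · rw [div_le_iff₀ hp]; nlinarith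
    · push_cast
      rw [div_eq_iff h2]
      linear_combination -h1
  have tA : Tendsto (fun y : ℕ × ℂ => y.2 - (A y.1 : ℂ)) (atTop ×ˢ 𝓝 z₀) (𝓝 (z₀ - a)) :=
    tendsto_snd.sub (((Complex.continuous_ofReal.tendsto a).comp hA).comp tendsto_fst)
  have tB : Tendsto (fun y : ℕ × ℂ => y.2 - (B y.1 : ℂ)) (atTop ×ˢ 𝓝 z₀) (𝓝 (z₀ - b)) :=
    tendsto_snd.sub (((Complex.continuous_ofReal.tendsto b).comp hB).comp tendsto_fst)
  unfold wBranch
  exact tA.mul ((Complex.continuous_exp.tendsto _).comp (((tB.div tA hza).clog hs).const_mul _))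

lemma harmExt_tendsto {a b : ℝ} (hab : a < b) {A B : ℕ → ℝ} (hAB : ∀ n, A n < B n)
    (hA : Tendsto A atTop (𝓝 a)) (hB : Tendsto B atTop (𝓝 b)) (u : ℕ → ℝ → ℝ) (U : ℝ → ℝ)
    (hU : Integrable U (arcsineMeasure a b))
    (hu : ∀ᶠ n in atTop, Integrable (fun x => u n (affIcc a b (A n) (B n) x)) (arcsineMeasure a b))
    (hlim : Tendsto (fun n => ∫ x, |u n (affIcc a b (A n) (B n) x) - U x| ∂(arcsineMeasure a b))
      atTop (𝓝 0)) {z₀ : ℂ} (hz : z₀ ∈ (Complex.ofReal '' Icc a b)ᶜ) :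
    Tendsto (fun y : ℕ × ℂ => harmExt (A y.1) (B y.1) (u y.1) y.2) (atTop ×ˢ 𝓝 z₀)
      (𝓝 (harmExt a b U z₀)) :=
  (Complex.continuous_re.tendsto _).comp
    ((wBranch_tendsto hab hA hB hz).mul (cauchyT_tendsto hab hAB hA hB u U hU hu hlim hz))

lemma affIcc_self {a b : ℝ} (hab : a < b) (x : ℝ) : affIcc a b a b x = x := by
  unfold affIcc; rw [div_self (by linarith)]; ring

lemma harmExt_locUnif {a b : ℝ} (hab : a < b) {A B : ℕ → ℝ} (hAB : ∀ n, A n < B n)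
    (hA : Tendsto A atTop (𝓝 a)) (hB : Tendsto B atTop (𝓝 b)) (u : ℕ → ℝ → ℝ) (U : ℝ → ℝ)
    (hU : Integrable U (arcsineMeasure a b))
    (hu : ∀ᶠ n in atTop, Integrable (fun x => u n (affIcc a b (A n) (B n) x)) (arcsineMeasure a b))
    (hlim : Tendsto (fun n => ∫ x, |u n (affIcc a b (A n) (B n) x) - U x| ∂(arcsineMeasure a b))
      atTop (𝓝 0)) :
    TendstoLocallyUniformlyOn (fun n z => harmExt (A n) (B n) (u n) z)
      (fun z => harmExt a b U z) atTop (Complex.ofReal '' Set.Icc a b)ᶜ := by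
  rw [tendstoLocallyUniformlyOn_iff_forall_tendsto]
  intro z₀ hz
  have t1 := harmExt_tendsto hab hAB hA hB u U hU hu hlim hz
  have t2 := harmExt_tendsto hab (A := fun _ => a) (B := fun _ => b) (fun _ => hab)
    tendsto_const_nhds tendsto_const_nhds (fun _ => U) U hU
    (by simpa only [affIcc_self hab] using Eventually.of_forall fun _ => hU)
    (by simp [affIcc_self hab]) hz
  have t3 := (t2.prodMk_nhds t1).mono_right (nhds_le_uniformity (harmExt a b U z₀))
  exact t3.mono_left (Filter.prod_mono le_rfl nhdsWithin_le_nhds)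

/-- Indicator of the set where the density does not vanish. -/
def nzInd (μ : Measure ℝ) (x : ℝ) : ℝ := {y | lebDeriv μ y ≠ 0}.indicator (fun _ => 1) x

lemma nzInd_measurable (μ : Measure ℝ) : Measurable (nzInd μ) := by
  have hm : Measurable (lebDeriv μ) := (Measure.measurable_rnDeriv μ volume).ennreal_toReal
  exact measurable_const.indicator (hm (measurableSet_singleton (0 : ℝ)).compl)

lemma nzInd_bound (μ : Measure ℝ) (x : ℝ) : |nzInd μ x| ≤ 1 := by
  unfold nzInd indicator
  split_ifs <;> simp

lemma log_vDens_aff (μ : Measure ℝ) {a b c d : ℝ} (hab : a < b) (hcd : c < d) {x : ℝ}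
    (hx : x ∈ Ioo a b) :
    Real.log (vDens μ c d (affIcc a b c d x)) = Real.log (lebDeriv μ (affIcc a b c d x))
      + nzInd μ (affIcc a b c d x) *
        (Real.log ((d - c) / (b - a)) + Real.log (Real.pi * Real.sqrt ((x - a) * (b - x)))) := by
  have h0 : 0 < (d - c) / (b - a) := div_pos (by linarith) (by linarith)
  have hs : 0 < Real.sqrt ((x - a) * (b - x)) :=
    Real.sqrt_pos.2 (mul_pos (by linarith [hx.1]) (by linarith [hx.2]))
  unfold vDens
  rw [affIcc_sqrt hab hcd]
  by_cases hD : lebDeriv μ (affIcc a b c d x) = 0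
  · simp [hD, nzInd]
  · have hn : nzInd μ (affIcc a b c d x) = 1 := by simp [nzInd, hD]
    have hp := Real.pi_pos
    rw [hn, one_mul, ← Real.log_mul h0.ne' (by positivity), ← Real.log_mul hD (by positivity)]
    congr 1
    ring

/-- Lemma 3.8: for a uniformly Szegő measure, the harmonic extensions
`H_{Δ_n}(log v_n + h_n|_{Δ_n})` converge to `H_Δ(log v + h|_Δ)` locally uniformly off `Δ`. -/
theorem harmonic_extension_convergence_USz
    (μ : Measure ℝ) (hfin : IsFiniteMeasure μ)
    (hbdd : Bornology.IsBounded (msupp μ))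
    (a b : ℝ) (hab : a < b) (hsub : Set.Icc a b ⊆ convHullSupp μ)
    (hUSz : USzCond μ a b)
    -- intervals `Δ_n = [An n, Bn n] ⊆ Δ(μ)` converging to `Δ = [a,b]`
    (An Bn : ℕ → ℝ) (hABn : ∀ n, An n < Bn n)
    (hsubn : ∀ n, Set.Icc (An n) (Bn n) ⊆ convHullSupp μ)
    (hA : Tendsto An atTop (𝓝 a)) (hB : Tendsto Bn atTop (𝓝 b))
    -- continuous functions converging uniformly on a closed interval containing `Δ`
    -- in its interior
    (p q : ℝ) (hpa : p < a) (hbq : b < q)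
    (h : ℕ → ℝ → ℝ) (hlim : ℝ → ℝ)
    (hcont : ∀ n, ContinuousOn (h n) (Set.Icc p q))
    (hunif : TendstoUniformlyOn h hlim atTop (Set.Icc p q)) :
    TendstoLocallyUniformlyOn
      (fun n z => harmExt (An n) (Bn n)
        (fun x => Real.log (vDens μ (An n) (Bn n) x) + h n x) z)
      (fun z => harmExt a b (fun x => Real.log (vDens μ a b x) + hlim x) z)
      atTop (Complex.ofReal '' Set.Icc a b)ᶜ := by
  obtain ⟨hSz, hU2⟩ := hUSz
  obtain ⟨hSzn, hUlim⟩ := hU2 An Bn hABn hsubn hA hB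
  have hfm := arcsine_finite hab
  have hχm := nzInd_measurable μ
  have hχ1 := nzInd_bound μ
  have hG := arcsine_log_int hab
  set g : ℝ → ℝ := fun x => Real.log (Real.pi * Real.sqrt ((x - a) * (b - x))) with hg
  have hmem : ∀ᵐ x ∂(arcsineMeasure a b), x ∈ Icc a b :=
    (arcsine_ae_mem a b).mono fun x hx => Ioo_subset_Icc_self hx
  have hlc : ContinuousOn hlim (Icc p q) :=
    hunif.continuousOn (Eventually.of_forall hcont).frequently
  -- integrability of continuous functions
  have hci : ∀ f : ℝ → ℝ, ContinuousOn f (Icc a b) → Integrable f (arcsineMeasure a b) := by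
    intro f hf
    have h1 : IntegrableOn f (Icc a b) (arcsineMeasure a b) :=
      hf.integrableOn_compact isCompact_Icc
    rwa [IntegrableOn, Measure.restrict_eq_self_of_ae_mem hmem] at h1
  have hIh : Integrable hlim (arcsineMeasure a b) :=
    hci _ (hlc.mono (Icc_subset_Icc hpa.le hbq.le))
  have hχg : ∀ l : ℝ → ℝ, Measurable l →
      Integrable (fun x => nzInd μ (l x) * g x) (arcsineMeasure a b) := fun l hl =>
    hG.bdd_mul (c := 1) (hχm.comp hl).aestronglyMeasurable (Eventually.of_forall fun x => hχ1 _)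
  have hχc : ∀ l : ℝ → ℝ, Measurable l →
      Integrable (fun x => nzInd μ (l x)) (arcsineMeasure a b) := fun l hl =>
    Integrable.mono' (integrable_const (1 : ℝ)) (hχm.comp hl).aestronglyMeasurable
      (Eventually.of_forall fun x => hχ1 _)
  have hnear : ∀ᶠ n in atTop, ∀ x ∈ Icc a b, affIcc a b (An n) (Bn n) x ∈ Icc p q := by
    have h0 : 0 < min (a - p) (q - b) := lt_min (by linarith) (by linarith)
    filter_upwards [affIcc_near hab hA hB h0] with n hn x hx
    have h1 := abs_lt.1 (hn x hx)
    have h2 := min_le_left (a - p) (q - b)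
    have h3 := min_le_right (a - p) (q - b)
    exact ⟨by linarith [hx.1], by linarith [hx.2]⟩
  have hInt1 : ∀ᶠ n in atTop, Integrable
      (fun x => Real.log (lebDeriv μ (affIcc a b (An n) (Bn n) x))) (arcsineMeasure a b) := by
    filter_upwards [hSzn] with n hn
    unfold SzCond at hn
    rw [← arcsine_map hab (hABn n), (affIcc_embedding hab (hABn n)).integrable_map_iff] at hn
    exact hn
  have hInt2 : ∀ᶠ n in atTop, Integrable
      (fun x => h n (affIcc a b (An n) (Bn n) x)) (arcsineMeasure a b) := by
    filter_upwards [hnear] with n hn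
    exact hci _ ((hcont n).comp (affIcc_continuous _ _ _ _).continuousOn hn)
  have hlogn : ∀ n, ∀ᵐ x ∂(arcsineMeasure a b),
      Real.log (vDens μ (An n) (Bn n) (affIcc a b (An n) (Bn n) x)) =
        Real.log (lebDeriv μ (affIcc a b (An n) (Bn n) x))
        + nzInd μ (affIcc a b (An n) (Bn n) x) * (Real.log ((Bn n - An n) / (b - a)) + g x) := by
    intro n
    filter_upwards [arcsine_ae_mem a b] with x hx
    exact log_vDens_aff μ hab (hABn n) hx
  have hlog : ∀ᵐ x ∂(arcsineMeasure a b), Real.log (vDens μ a b x) =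
      Real.log (lebDeriv μ x) + nzInd μ x * g x := by
    filter_upwards [arcsine_ae_mem a b] with x hx
    have h1 := log_vDens_aff μ hab hab hx
    rw [affIcc_self hab, div_self (by linarith), Real.log_one, zero_add] at h1
    exact h1
  have hIU : Integrable (fun x => Real.log (vDens μ a b x) + hlim x) (arcsineMeasure a b) := by
    refine Integrable.add ?_ hIh
    refine (hSz.add (hχg id measurable_id)).congr ?_
    filter_upwards [hlog] with x hx
    rw [hx]; rfl
  have hIn : ∀ᶠ n in atTop, Integrable (fun x =>
      Real.log (vDens μ (An n) (Bn n) (affIcc a b (An n) (Bn n) x))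
        + h n (affIcc a b (An n) (Bn n) x)) (arcsineMeasure a b) := by
    filter_upwards [hInt1, hInt2] with n h1 h2
    have hml := (affIcc_embedding hab (hABn n)).measurable
    refine Integrable.add ?_ h2
    refine (h1.add (((hχc _ hml).mul_const (Real.log ((Bn n - An n) / (b - a)))).add
      (hχg _ hml))).congr ?_
    filter_upwards [hlogn n] with x hx
    rw [hx, mul_add]; rfl
  refine harmExt_locUnif hab hABn hA hB
    (fun n x => Real.log (vDens μ (An n) (Bn n) x) + h n x) _ hIU hIn ?_
  -- the four pieces
  have P2 : Tendsto (fun n => ∫ _, |Real.log ((Bn n - An n) / (b - a))| ∂(arcsineMeasure a b))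
      atTop (𝓝 0) := by
    have h1 := ((ratio_tendsto hab hA hB).log one_ne_zero).abs
    rw [Real.log_one, abs_zero] at h1
    have h2 := h1.const_mul ((arcsineMeasure a b).real univ)
    simpa only [integral_const, smul_eq_mul, mul_zero] using h2
  have P3 : Tendsto (fun n => ∫ x, |nzInd μ (affIcc a b (An n) (Bn n) x) - nzInd μ x| * |g x|
      ∂(arcsineMeasure a b)) atTop (𝓝 0) := by
    have hw := (arcsine_integrable_iff _).1 hG.abs
    have h1 := affIcc_weighted hab hABn hA hB hχm hχ1 hw (fun x => by positivity)
    refine h1.congr fun n => ?_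
    rw [arcsine_integral]
    refine integral_congr_ae (Eventually.of_forall fun x => ?_)
    dsimp only
    ring
  have P4 : Tendsto (fun n => ∫ x, |h n (affIcc a b (An n) (Bn n) x) - hlim x|
      ∂(arcsineMeasure a b)) atTop (𝓝 0) := by
    obtain ⟨M, hM⟩ := (isCompact_Icc (a := p) (b := q)).exists_bound_of_continuousOn hlc
    have h0 : Tendsto (fun n => ∫ x, |h n (affIcc a b (An n) (Bn n) x) - hlim x|
      ∂(arcsineMeasure a b)) atTop (𝓝 (∫ x, (0 : ℝ) ∂(arcsineMeasure a b))) := by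
      refine tendsto_integral_filter_of_dominated_convergence (fun _ => 1 + (M + M)) ?_ ?_
        (integrable_const _) ?_
      · filter_upwards [hInt2] with n h2
        exact (h2.sub hIh).abs.aestronglyMeasurable
      · filter_upwards [hnear, Metric.tendstoUniformlyOn_iff.1 hunif 1 one_pos] with n hn hu
        filter_upwards [hmem] with x hx
        have h1 := hu _ (hn x hx)
        have h2 := hM _ (hn x hx)
        have h3 := hM x ⟨by linarith [hx.1], by linarith [hx.2]⟩
        rw [dist_comm, Real.dist_eq] at h1
        rw [Real.norm_eq_abs] at h2 h3
        rw [Real.norm_eq_abs, abs_abs]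
        have h4 := abs_sub_le (h n (affIcc a b (An n) (Bn n) x))
          (hlim (affIcc a b (An n) (Bn n) x)) (hlim x)
        have h5 := abs_sub (hlim (affIcc a b (An n) (Bn n) x)) (hlim x)
        linarith
      · filter_upwards [hmem] with x hx
        have hxm : Icc p q ∈ 𝓝 x := Icc_mem_nhds (by linarith [hx.1]) (by linarith [hx.2])
        have h1 : Tendsto (fun n => h n (affIcc a b (An n) (Bn n) x)) atTop (𝓝 (hlim x)) := by
          have ht := affIcc_tendsto hab hA hB x
          have h2 := (hlc.continuousAt hxm).tendsto.comp ht
          rw [Metric.tendsto_atTop'] at h2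
          rw [Metric.tendsto_nhds]
          intro ε hε
          have h3 : ∀ᶠ n in atTop, dist (hlim (affIcc a b (An n) (Bn n) x)) (hlim x) < ε / 2 :=
            ((hlc.continuousAt hxm).tendsto.comp ht).eventually (Metric.ball_mem_nhds _ (by positivity))
          filter_upwards [hnear, Metric.tendstoUniformlyOn_iff.1 hunif (ε / 2) (by positivity), h3]
            with n hn hu h4
          have h5 := hu _ (hn x hx)
          rw [dist_comm] at h5
          exact (dist_triangle _ _ _).trans_lt (by linarith)
        simpa using (h1.sub_const (hlim x)).abs
    simpa using h0
  have hsum := ((hUlim.add P2).add P3).add P4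
  simp only [add_zero] at hsum
  refine squeeze_zero' (Eventually.of_forall fun n => integral_nonneg fun x => abs_nonneg _) ?_ hsum
  filter_upwards [hInt1, hInt2] with n h1 h2
  have hml := (affIcc_embedding hab (hABn n)).measurable
  have Q1 : Integrable (fun x => |Real.log (lebDeriv μ x) -
      Real.log (lebDeriv μ (affIcc a b (An n) (Bn n) x))|) (arcsineMeasure a b) := (hSz.sub h1).abs
  have Q2 : Integrable (fun _ : ℝ => |Real.log ((Bn n - An n) / (b - a))|) (arcsineMeasure a b) :=
    integrable_const _
  have Q3 : Integrable (fun x => |nzInd μ (affIcc a b (An n) (Bn n) x) - nzInd μ x| * |g x|)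
      (arcsineMeasure a b) := by
    refine ((hχg _ hml).sub (hχg id measurable_id)).abs.congr (Eventually.of_forall fun x => ?_)
    simp only [Pi.sub_apply, id]
    rw [← abs_mul, sub_mul]
  have Q4 : Integrable (fun x => |h n (affIcc a b (An n) (Bn n) x) - hlim x|)
      (arcsineMeasure a b) := (h2.sub hIh).abs
  have Q12 : Integrable (fun x => |Real.log (lebDeriv μ x) -
      Real.log (lebDeriv μ (affIcc a b (An n) (Bn n) x))|
      + |Real.log ((Bn n - An n) / (b - a))|) (arcsineMeasure a b) := Q1.add Q2
  have Q123 : Integrable (fun x => |Real.log (lebDeriv μ x) -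
      Real.log (lebDeriv μ (affIcc a b (An n) (Bn n) x))|
      + |Real.log ((Bn n - An n) / (b - a))|
      + |nzInd μ (affIcc a b (An n) (Bn n) x) - nzInd μ x| * |g x|) (arcsineMeasure a b) :=
    Q12.add Q3
  rw [← integral_add Q1 Q2, ← integral_add Q12 Q3, ← integral_add Q123 Q4]
  refine integral_mono_of_nonneg (Eventually.of_forall fun x => abs_nonneg _) (Q123.add Q4) ?_
  filter_upwards [hlog, hlogn n] with x hx hxn
  rw [hx, hxn]
  set L1 := Real.log (lebDeriv μ x)
  set L2 := Real.log (lebDeriv μ (affIcc a b (An n) (Bn n) x))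
  set R := Real.log ((Bn n - An n) / (b - a))
  have hc := hχ1 (affIcc a b (An n) (Bn n) x)
  set c1 := nzInd μ x
  set c2 := nzInd μ (affIcc a b (An n) (Bn n) x)
  have e : L2 + c2 * (R + g x) + h n (affIcc a b (An n) (Bn n) x) - (L1 + c1 * g x + hlim x) =
      -(L1 - L2) + c2 * R + (c2 - c1) * g x + (h n (affIcc a b (An n) (Bn n) x) - hlim x) := by ring
  rw [e]
  refine (abs_add_le _ _).trans (add_le_add ((abs_add_le _ _).trans (add_le_add
    ((abs_add_le _ _).trans (add_le_add (abs_neg _).le ?_)) (abs_mul _ _).le)) le_rfl)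
  rw [abs_mul]
  exact mul_le_of_le_one_left (abs_nonneg _) hc

end
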